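/- arXiv:2507.02540 — 2 statements merged into one kernel-verified Lean document; each statement's English description precedes it below -/
import Mathlib

section
/- Each single-copy marginal of the channel output is maximally mixed: for every natural number n, every natural number α' and α = α' + 1, and every unit vector ψ : (Fin n → Fin 2) → ℂ, the matrix σ indexed by (Fin n → Fin 2) with entries σ b b' = Σ over all g : Fin α' → (Fin n → Fin 2) of ρ_α (Fin.cons b g) (Fin.cons b' g) equals (d⁻¹ : ℂ) • 1, where d = 2^n. -/
open Complex Matrix BigOperators

/-- The single-qubit Pauli matrices `Q₀ = 1`, `Q₁ = X`, `Q₂ = Y`, `Q₃ = Z`. -/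
noncomputable def Q : Fin 4 → Matrix (Fin 2) (Fin 2) ℂ :=
  ![1, !![0, 1; 1, 0], !![0, -Complex.I; Complex.I, 0], !![1, 0; 0, -1]]

/-- The `n`-qubit Pauli string `P_s`, the Kronecker product of the `Q (s k)`. -/
noncomputable def P {n : ℕ} (s : Fin n → Fin 4) :
    Matrix (Fin n → Fin 2) (Fin n → Fin 2) ℂ :=
  Matrix.of fun i j => ∏ k, Q (s k) (i k) (j k)


/-- The channel output `E_P^α(|ψ⟩⟨ψ|^⊗α)`: each Pauli string applied with probability `d⁻²`
simultaneously to all `α` copies of `ψ`. -/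
noncomputable def rho (n α : ℕ) (ψ : (Fin n → Fin 2) → ℂ) :
    Matrix (Fin α → Fin n → Fin 2) (Fin α → Fin n → Fin 2) ℂ :=
  Matrix.of fun f g => ((2 ^ n : ℂ) ^ 2)⁻¹ *
    ∑ s : Fin n → Fin 4, ∏ m, ((P s).mulVec ψ (f m) * (starRingEnd ℂ) ((P s).mulVec ψ (g m)))

/-!
The output is a mixture over `s` of the tensor powers `(P_s |ψ⟩⟨ψ| P_sᴴ)^⊗α`. Tracing out all
copies but one replaces each traced factor by `tr (P_s |ψ⟩⟨ψ| P_sᴴ) = ⟨ψ|ψ⟩`, since `P_s` is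
unitary. What is left is the twirl `∑ₛ P_s |ψ⟩⟨ψ| P_sᴴ`, a multiple of the identity because the
Pauli matrices form an orthogonal operator basis. Their completeness relation is a statement about
matrix entries and therefore tensorizes from one qubit to `n`.
-/

section PiKronecker

variable {ι R : Type*} [Fintype ι] {l m n : ι → Type*}

/-- The Kronecker product `⨂ₖ A k` of a finite family of matrices, indexed by tuples. -/
def piKronecker [CommMonoid R] (A : ∀ k, Matrix (m k) (n k) R) :
    Matrix (∀ k, m k) (∀ k, n k) R :=
  Matrix.of fun i j => ∏ k, A k (i k) (j k)

variable [CommSemiring R]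

lemma piKronecker_mul_piKronecker [DecidableEq ι] [∀ k, Fintype (m k)]
    (A : ∀ k, Matrix (l k) (m k) R) (B : ∀ k, Matrix (m k) (n k) R) :
    piKronecker A * piKronecker B = piKronecker fun k => A k * B k := by
  ext i j
  simp only [piKronecker, mul_apply, of_apply, ← Finset.prod_mul_distrib, Fintype.prod_sum]

lemma conjTranspose_piKronecker [StarRing R] (A : ∀ k, Matrix (m k) (n k) R) :
    (piKronecker A)ᴴ = piKronecker fun k => (A k)ᴴ := by
  ext i j
  simp only [piKronecker, conjTranspose_apply, of_apply, star_prod]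

lemma piKronecker_one [∀ k, DecidableEq (m k)] :
    (piKronecker fun _ => 1 : Matrix (∀ k, m k) (∀ k, m k) R) = 1 := by
  ext i j
  simp only [piKronecker, of_apply, one_apply, Fintype.prod_boole, funext_iff]

end PiKronecker

lemma piKronecker_mem_unitaryGroup {ι R : Type*} [Fintype ι] [DecidableEq ι] [CommRing R]
    [StarRing R] {m : ι → Type*} [∀ k, Fintype (m k)] [∀ k, DecidableEq (m k)]
    {U : ∀ k, Matrix (m k) (m k) R} (hU : ∀ k, U k ∈ unitaryGroup (m k) R) :
    piKronecker U ∈ unitaryGroup (∀ k, m k) R := by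
  simp only [mem_unitaryGroup_iff', star_eq_conjTranspose] at hU ⊢
  simp only [conjTranspose_piKronecker, piKronecker_mul_piKronecker, hU, piKronecker_one]

lemma trace_mul_mul_conjTranspose_of_mem_unitaryGroup {m R : Type*} [Fintype m] [DecidableEq m]
    [CommRing R] [StarRing R] {U : Matrix m m R} (hU : U ∈ unitaryGroup m R) (A : Matrix m m R) :
    (U * A * Uᴴ).trace = A.trace := by
  rw [trace_mul_cycle, ← star_eq_conjTranspose, mem_unitaryGroup_iff'.mp hU, one_mul]

section IsCompleteFamily

variable {κ m n R : Type*} [Fintype κ] [DecidableEq m] [DecidableEq n] [CommSemiring R] [StarRing R]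

/-- The completeness relation `∑ₛ (Eₛ)ᵢⱼ (Eₛ)*ᵢ'ⱼ' = c δᵢᵢ' δⱼⱼ'` of an operator family, with
normalization `c`; equivalently, `∑ₛ Eₛ A Eₛᴴ = c tr(A) 1` for every `A`. -/
def IsCompleteFamily (E : κ → Matrix m n R) (c : R) : Prop :=
  ∀ i i' j j', ∑ s, E s i j * star (E s i' j') =
    c * ((1 : Matrix m m R) i i' * (1 : Matrix n n R) j j')

lemma IsCompleteFamily.sum_mul_mul_conjTranspose [Fintype n] {E : κ → Matrix m n R} {c : R}
    (hE : IsCompleteFamily E c) (A : Matrix n n R) :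
    ∑ s, E s * A * (E s)ᴴ = (c * A.trace) • (1 : Matrix m m R) := by
  ext i i'
  calc (∑ s, E s * A * (E s)ᴴ) i i'
      = ∑ s, ∑ j', ∑ j, E s i j * star (E s i' j') * A j j' := by
        simp only [Matrix.sum_apply, mul_apply, conjTranspose_apply, Finset.sum_mul,
          mul_right_comm _ (A _ _)]
    _ = ∑ j', ∑ j, (∑ s, E s i j * star (E s i' j')) * A j j' := by
        simp only [Finset.sum_mul]
        rw [Finset.sum_comm]
        exact Finset.sum_congr rfl fun j' _ => Finset.sum_comm
    _ = ((c * A.trace) • (1 : Matrix m m R)) i i' := by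
        simp only [hE i i' _ _, one_apply (α := R) (n := n), mul_ite, mul_one, mul_zero, ite_mul,
          zero_mul, Finset.sum_ite_eq', Finset.mem_univ, if_true, trace, diag_apply,
          Matrix.smul_apply, smul_eq_mul, Finset.mul_sum, Finset.sum_mul, mul_right_comm]

lemma IsCompleteFamily.pi {ι : Type*} [Fintype ι] [DecidableEq ι] {κ m n : ι → Type*}
    [∀ k, Fintype (κ k)] [∀ k, DecidableEq (m k)] [∀ k, DecidableEq (n k)]
    {E : ∀ k, κ k → Matrix (m k) (n k) R} {c : ι → R} (hE : ∀ k, IsCompleteFamily (E k) (c k)) :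
    IsCompleteFamily (fun s : ∀ k, κ k => piKronecker fun k => E k (s k)) (∏ k, c k) := by
  intro i i' j j'
  calc ∑ s : ∀ k, κ k, (∏ k, E k (s k) (i k) (j k)) * star (∏ k, E k (s k) (i' k) (j' k))
      = ∏ k, ∑ t, E k t (i k) (j k) * star (E k t (i' k) (j' k)) := by
        simp only [star_prod, ← Finset.prod_mul_distrib, Fintype.prod_sum]
    _ = (∏ k, c k) * ((1 : Matrix (∀ k, m k) _ R) i i' * (1 : Matrix (∀ k, n k) _ R) j j') := by
        simp only [hE _ _ _ _ _, Finset.prod_mul_distrib, ← piKronecker_one, piKronecker,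
          of_apply]

end IsCompleteFamily

section Marginal

variable {N : ℕ} {R : Type*} {d : Fin (N + 1) → Type*} [∀ k, Fintype (d k)]

/-- The reduced matrix at site `k` of an `N + 1`-partite matrix: the partial trace over all the
other sites. -/
def marginal [AddCommMonoid R] (k : Fin (N + 1)) (M : Matrix (∀ k, d k) (∀ k, d k) R) :
    Matrix (d k) (d k) R :=
  Matrix.of fun b b' => ∑ g : ∀ j, d (k.succAbove j), M (k.insertNth b g) (k.insertNth b' g)

lemma marginal_sum [AddCommMonoid R] {κ : Type*} (k : Fin (N + 1)) (s : Finset κ)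
    (M : κ → Matrix (∀ k, d k) (∀ k, d k) R) :
    marginal k (∑ x ∈ s, M x) = ∑ x ∈ s, marginal k (M x) := by
  ext b b'
  simp only [marginal, of_apply, Matrix.sum_apply]
  exact Finset.sum_comm

lemma marginal_smul {S : Type*} [AddCommMonoid R] [DistribSMul S R] (k : Fin (N + 1)) (c : S)
    (M : Matrix (∀ k, d k) (∀ k, d k) R) :
    marginal k (c • M) = c • marginal k M := by
  ext b b'
  simp only [marginal, of_apply, Matrix.smul_apply, Finset.smul_sum]

lemma marginal_piKronecker [CommSemiring R] (k : Fin (N + 1)) (A : ∀ k, Matrix (d k) (d k) R) :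
    marginal k (piKronecker A) = (∏ j, (A (k.succAbove j)).trace) • A k := by
  ext b b'
  simp only [marginal, piKronecker, of_apply, Fin.prod_univ_succAbove _ k,
    Fin.insertNth_apply_same, Fin.insertNth_apply_succAbove, ← Finset.mul_sum, trace, diag_apply,
    Fintype.prod_sum, Matrix.smul_apply, smul_eq_mul]
  exact mul_comm _ _

end Marginal

lemma Q_mem_unitaryGroup (t : Fin 4) : Q t ∈ unitaryGroup (Fin 2) ℂ := by
  rw [mem_unitaryGroup_iff']
  fin_cases t <;> ext i j <;> fin_cases i <;> fin_cases j <;>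
    simp [Q, star_eq_conjTranspose, mul_apply]

lemma isCompleteFamily_Q : IsCompleteFamily Q 2 := by
  intro i i' j j'
  fin_cases i <;> fin_cases i' <;> fin_cases j <;> fin_cases j' <;>
    simp [Q, Fin.sum_univ_four] <;> norm_num

section PauliStrings

variable {n : ℕ}

lemma P_eq_piKronecker (s : Fin n → Fin 4) : P s = piKronecker fun k => Q (s k) :=
  rfl

lemma P_mem_unitaryGroup (s : Fin n → Fin 4) : P s ∈ unitaryGroup (Fin n → Fin 2) ℂ :=
  P_eq_piKronecker s ▸ piKronecker_mem_unitaryGroup fun k => Q_mem_unitaryGroup (s k)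

lemma isCompleteFamily_P : IsCompleteFamily (P (n := n)) (2 ^ n) := by
  simpa [← funext P_eq_piKronecker] using
    IsCompleteFamily.pi fun _ : Fin n => isCompleteFamily_Q

lemma rho_eq_smul_sum_piKronecker (α : ℕ) (ψ : (Fin n → Fin 2) → ℂ) :
    rho n α ψ = ((2 ^ n : ℂ) ^ 2)⁻¹ •
      ∑ s, piKronecker fun _ : Fin α => P s * vecMulVec ψ (star ψ) * (P s)ᴴ := by
  ext f g
  simp only [rho, piKronecker, mul_vecMulVec, vecMulVec_mul, ← star_mulVec, vecMulVec_apply,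
    of_apply, Matrix.smul_apply, Matrix.sum_apply, smul_eq_mul, Pi.star_apply, starRingEnd_apply]

end PauliStrings

theorem single_copy_marginal_maximally_mixed_general (n α' : ℕ) (k : Fin (α' + 1))
    (ψ : (Fin n → Fin 2) → ℂ) :
    marginal k (rho n (α' + 1) ψ) =
      ((star ψ ⬝ᵥ ψ) ^ (α' + 1) * (2 ^ n : ℂ)⁻¹) •
        (1 : Matrix (Fin n → Fin 2) (Fin n → Fin 2) ℂ) := by
  set A := vecMulVec ψ (star ψ)
  have trace_A : A.trace = star ψ ⬝ᵥ ψ := by rw [trace_vecMulVec, dotProduct_comm]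
  calc marginal k (rho n (α' + 1) ψ)
      = ((2 ^ n : ℂ) ^ 2)⁻¹ • ∑ s, A.trace ^ α' • (P s * A * (P s)ᴴ) := by
        simp only [rho_eq_smul_sum_piKronecker, marginal_smul, marginal_sum, marginal_piKronecker,
          trace_mul_mul_conjTranspose_of_mem_unitaryGroup (P_mem_unitaryGroup _),
          Finset.prod_const, Finset.card_univ, Fintype.card_fin, A]
    _ = ((2 ^ n : ℂ) ^ 2)⁻¹ • A.trace ^ α' • (2 ^ n * A.trace) • 1 := by
        rw [← Finset.smul_sum, isCompleteFamily_P.sum_mul_mul_conjTranspose]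
    _ = ((star ψ ⬝ᵥ ψ) ^ (α' + 1) * (2 ^ n : ℂ)⁻¹) • 1 := by
        rw [smul_smul, smul_smul, trace_A]
        congr 1
        field_simp
        ring

theorem single_copy_marginal_maximally_mixed (n α' : ℕ) (ψ : (Fin n → Fin 2) → ℂ)
    (hψ : star ψ ⬝ᵥ ψ = 1) :
    (Matrix.of fun b b' : Fin n → Fin 2 =>
        ∑ g : Fin α' → Fin n → Fin 2,
          rho n (α' + 1) ψ (Fin.cons b g) (Fin.cons b' g))
      = ((2 ^ n : ℂ))⁻¹ • (1 : Matrix (Fin n → Fin 2) (Fin n → Fin 2) ℂ) := by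
  simpa [marginal, hψ] using single_copy_marginal_maximally_mixed_general n α' 0 ψ
end

section
/- The purity of the ancilla marginal also encodes the α-Stabilizer Rényi quantity: for every natural number n, every integer α ≥ 1, and every unit vector ψ : (Fin n → Fin 2) → ℂ, letting χ be the matrix indexed by (Fin n → Fin 4) with entries χ i j = Σ over all f : Fin α → Fin n → Fin 2 of ψ'_α (i, f) · conj(ψ'_α (j, f)), one has Re( trace(χ * χ) ) = d⁻¹ · A_α(ψ), where d = 2^n. -/
open Complex Matrix BigOperators

/-- `A_α(ψ) = d⁻¹ ∑_s ⟨ψ, P_s ψ⟩^(2α)` with `d = 2^n`. -/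
noncomputable def A (n α : ℕ) (ψ : (Fin n → Fin 2) → ℂ) : ℝ :=
  (2 ^ n : ℝ)⁻¹ * ∑ s : Fin n → Fin 4, (star ψ ⬝ᵥ (P s).mulVec ψ).re ^ (2 * α)


/-- The purified state `ψ′_α = d⁻¹ ∑_t |t⟩ ⊗ (P_t ψ)^⊗α`. -/
noncomputable def psi' (n α : ℕ) (ψ : (Fin n → Fin 2) → ℂ) :
    (Fin n → Fin 4) × (Fin α → Fin n → Fin 2) → ℂ :=
  fun p => (2 ^ n : ℂ)⁻¹ * ∏ m, (P p.1).mulVec ψ (p.2 m)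


/-- Ancilla marginal of the purified state. -/
noncomputable def chi (n α : ℕ) (ψ : (Fin n → Fin 2) → ℂ) :
    Matrix (Fin n → Fin 4) (Fin n → Fin 4) ℂ :=
  Matrix.of fun i j => ∑ f : Fin α → Fin n → Fin 2,
    psi' n α ψ (i, f) * (starRingEnd ℂ) (psi' n α ψ (j, f))

/-!
Writing `d = 2 ^ n`, the entry `χ s t` is the overlap of `(P_s ψ)^⊗α` with `(P_t ψ)^⊗α`, that is
`d⁻² ⟨ψ, P_t P_s ψ⟩ ^ α`. Up to a phase, `P_t P_s` is the Pauli string indexed by the sitewise xor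
of `t` and `s`, and the phase disappears in `tr χ² = ∑ |χ s t|²`. For fixed `t` the xor with `t`
permutes all strings, so each of the `d²` columns contributes
`d⁻⁴ ∑_s ⟨ψ, P_s ψ⟩ ^ (2α) = d⁻³ A_α(ψ)`.
-/

section LinearAlgebra

variable {ι ι' κ 𝕜 R : Type*} [Fintype ι] [Fintype ι'] [Fintype κ]

lemma trace_mul_self_of_isHermitian [RCLike 𝕜] {M : Matrix ι ι 𝕜} (hM : M.IsHermitian) :
    (M * M).trace = ((∑ i, ∑ j, ‖M i j‖ ^ 2 : ℝ) : 𝕜) := by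
  simp only [trace, diag_apply, mul_apply]
  push_cast
  refine Fintype.sum_congr _ _ fun i => Fintype.sum_congr _ _ fun j => ?_
  rw [← hM.apply j i, RCLike.star_def, RCLike.mul_conj]

lemma mulVec_dotProduct_star_mulVec [CommSemiring R] [StarRing R]
    (M : Matrix κ ι R) (N : Matrix κ ι' R) (v : ι → R) (w : ι' → R) :
    (M *ᵥ v) ⬝ᵥ star (N *ᵥ w) = star w ⬝ᵥ (Nᴴ * M) *ᵥ v := by
  rw [dotProduct_comm, star_mulVec, ← dotProduct_mulVec, mulVec_mulVec]

lemma sum_prod_mul_star_prod_eq_dotProduct_pow [CommSemiring R] [StarRing R]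
    (u v : ι → R) (α : ℕ) :
    ∑ f : Fin α → ι, (∏ m, u (f m)) * star (∏ m, v (f m)) = (u ⬝ᵥ star v) ^ α := by
  simp only [dotProduct, Fintype.sum_pow, star_prod, Pi.star_apply, Finset.prod_mul_distrib]

end LinearAlgebra

section Xor

instance : LawfulXor (Fin 4) := inferInstanceAs (LawfulXor (Fin (2 ^ 2)))

lemma sum_comp_xor_left {ι κ M : Type*} [Fintype ι] [DecidableEq ι] [Fintype κ] [XorOp κ] [Zero κ]
    [LawfulXor κ] [AddCommMonoid M] (s : ι → κ) (f : (ι → κ) → M) :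
    ∑ t : ι → κ, f (fun k => s k ^^^ t k) = ∑ t, f t :=
  (Equiv.piCongrRight fun k => Equiv.xor (s k)).sum_comp f

end Xor

section Pauli

/-- The phase `c` in the single-qubit multiplication table `Q a * Q b = c • Q (a ^^^ b)`. With the
numbering `1, X, Y, Z` of the Pauli matrices, the index of a product is the bitwise xor of the
indices. -/
noncomputable def pauliPhase : Fin 4 → Fin 4 → ℂ :=
  ![![1, 1, 1, 1], ![1, 1, I, -I], ![1, -I, 1, I], ![1, I, -I, 1]]

lemma norm_pauliPhase (a b : Fin 4) : ‖pauliPhase a b‖ = 1 := by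
  fin_cases a <;> fin_cases b <;> simp [pauliPhase]

lemma Q_mul_Q (a b : Fin 4) : Q a * Q b = pauliPhase a b • Q (a ^^^ b) := by
  fin_cases a <;> fin_cases b <;> ext x y <;> fin_cases x <;> fin_cases y <;>
    simp [Q, pauliPhase]

lemma Q_isHermitian (a : Fin 4) : (Q a).IsHermitian := by
  ext x y
  fin_cases a <;> fin_cases x <;> fin_cases y <;> simp [Q]

variable {n : ℕ}

lemma P_mul_P (s t : Fin n → Fin 4) :
    P s * P t = (∏ k, pauliPhase (s k) (t k)) • P (fun k => s k ^^^ t k) := by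
  ext i j
  calc (P s * P t) i j
      = ∑ l : Fin n → Fin 2, ∏ k, Q (s k) (i k) (l k) * Q (t k) (l k) (j k) := by
        simp only [mul_apply, P, of_apply, Finset.prod_mul_distrib]
    _ = ∏ k, (Q (s k) * Q (t k)) (i k) (j k) := by
        simp only [mul_apply, Fintype.prod_sum]
    _ = ((∏ k, pauliPhase (s k) (t k)) • P fun k => s k ^^^ t k) i j := by
        simp only [Q_mul_Q, Matrix.smul_apply, smul_eq_mul, P, of_apply, Finset.prod_mul_distrib]

lemma P_isHermitian (s : Fin n → Fin 4) : (P s).IsHermitian := by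
  ext i j
  simp only [conjTranspose_apply, P, of_apply, star_prod, (Q_isHermitian _).apply]

lemma norm_star_dotProduct_P_mul_P_mulVec (s t : Fin n → Fin 4) (ψ : (Fin n → Fin 2) → ℂ) :
    ‖star ψ ⬝ᵥ (P s * P t) *ᵥ ψ‖ = |(star ψ ⬝ᵥ P (fun k => s k ^^^ t k) *ᵥ ψ).re| := by
  have hreal : |(star ψ ⬝ᵥ P (fun k => s k ^^^ t k) *ᵥ ψ).re| =
      ‖star ψ ⬝ᵥ P (fun k => s k ^^^ t k) *ᵥ ψ‖ :=
    abs_re_eq_norm.2 ((P_isHermitian _).im_star_dotProduct_mulVec_self ψ)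
  rw [hreal, P_mul_P, smul_mulVec, dotProduct_smul, norm_smul, norm_prod]
  simp only [norm_pauliPhase, Finset.prod_const_one, one_mul]

end Pauli

section Chi

variable {n : ℕ} (α : ℕ) (ψ : (Fin n → Fin 2) → ℂ)

lemma chi_isHermitian : (chi n α ψ).IsHermitian :=
  isHermitian_mul_conjTranspose_self (of fun i f => psi' n α ψ (i, f))

lemma chi_apply (s t : Fin n → Fin 4) :
    chi n α ψ s t = (2 ^ n : ℂ)⁻¹ ^ 2 * (star ψ ⬝ᵥ (P t * P s) *ᵥ ψ) ^ α := by
  have hinner : (P s *ᵥ ψ) ⬝ᵥ star (P t *ᵥ ψ) = star ψ ⬝ᵥ (P t * P s) *ᵥ ψ := by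
    rw [mulVec_dotProduct_star_mulVec, (P_isHermitian t).eq]
  rw [← hinner, ← sum_prod_mul_star_prod_eq_dotProduct_pow, Finset.mul_sum]
  refine Fintype.sum_congr _ _ fun f => ?_
  simp only [psi', map_mul, map_inv₀, map_pow, map_ofNat, starRingEnd_apply]
  ring

lemma norm_chi_apply_sq (s t : Fin n → Fin 4) :
    ‖chi n α ψ s t‖ ^ 2 =
      (2 ^ n : ℝ)⁻¹ ^ 4 * (star ψ ⬝ᵥ P (fun k => t k ^^^ s k) *ᵥ ψ).re ^ (2 * α) := by
  rw [chi_apply, norm_mul, norm_pow, norm_pow, norm_star_dotProduct_P_mul_P_mulVec, norm_inv,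
    norm_pow, Complex.norm_ofNat, pow_mul, ← sq_abs (re _)]
  ring

lemma sum_norm_chi_apply_sq (t : Fin n → Fin 4) :
    ∑ s, ‖chi n α ψ s t‖ ^ 2 = (2 ^ n : ℝ)⁻¹ ^ 3 * A n α ψ := by
  simp only [norm_chi_apply_sq, ← Finset.mul_sum]
  rw [sum_comp_xor_left t fun s => (star ψ ⬝ᵥ P s *ᵥ ψ).re ^ (2 * α), A]
  ring

end Chi

theorem ancilla_purity_encodes_A_general (n α : ℕ) (ψ : (Fin n → Fin 2) → ℂ) :
    (chi n α ψ * chi n α ψ).trace = ((2 ^ n : ℝ)⁻¹ * A n α ψ : ℝ) := by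
  have hcard : (Fintype.card (Fin n → Fin 4) : ℝ) = (2 ^ n) ^ 2 := by
    rw [Fintype.card_fun, Fintype.card_fin, Fintype.card_fin, Nat.cast_pow, pow_right_comm]
    norm_num
  rw [trace_mul_self_of_isHermitian (chi_isHermitian α ψ), Finset.sum_comm]
  refine congrArg Complex.ofReal ?_
  calc ∑ t, ∑ s, ‖chi n α ψ s t‖ ^ 2
      = (2 ^ n) ^ 2 * ((2 ^ n : ℝ)⁻¹ ^ 3 * A n α ψ) := by
        simp only [sum_norm_chi_apply_sq, Finset.sum_const, Finset.card_univ, nsmul_eq_mul, hcard]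
    _ = (2 ^ n : ℝ)⁻¹ * A n α ψ := by field_simp

theorem ancilla_purity_encodes_A (n α : ℕ) (hα : 1 ≤ α) (ψ : (Fin n → Fin 2) → ℂ)
    (hψ : star ψ ⬝ᵥ ψ = 1) :
    ((chi n α ψ * chi n α ψ).trace).re = (2 ^ n : ℝ)⁻¹ * A n α ψ := by
  rw [ancilla_purity_encodes_A_general, ofReal_re]
end
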